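/- Let E₂(q) = 1 − 24 Σ_{n=1}^∞ σ₁(n) qⁿ, and for |x| < 1 define D_y(x) = Σ_{r≥0} (2r+1) x^{16(2r+1)²} + Σ_{0≤r<s} (2r+2s+2) x^{16(2r+1)(2s+1)}. Then for every complex number x with |x| < 1, D_y(x) = − E₂(x^{16})/24 + E₂(x^{32})/8 − E₂(x^{64})/12. -/

import Mathlib

open scoped BigOperators

/-- The weight-2 Eisenstein series `E₂(q) = 1 − 24 Σ_{n=1}^∞ σ₁(n) qⁿ`. -/
noncomputable def E2 (q : ℂ) : ℂ :=
  1 - 24 * ∑' n : ℕ, (ArithmeticFunction.sigma 1 (n + 1) : ℂ) * q ^ (n + 1)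

/-- `D_y(x) = Σ_{r≥0} (2r+1) x^{16(2r+1)²} + Σ_{0≤r<s} (2r+2s+2) x^{16(2r+1)(2s+1)}`,
which is `x⁴·d_y(x)` for the coefficient `d_y` of `y⁴` in the open
Gromov–Witten potential of `ℙ¹_{2,4,4}`. -/
noncomputable def Dy (x : ℂ) : ℂ :=
  (∑' r : ℕ, (2 * (r : ℂ) + 1) * x ^ (16 * (2 * r + 1) ^ 2))
    + ∑' p : {p : ℕ × ℕ // p.1 < p.2},
        (2 * ((p : ℕ × ℕ).1 : ℂ) + 2 * ((p : ℕ × ℕ).2 : ℂ) + 2)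
          * x ^ (16 * (2 * (p : ℕ × ℕ).1 + 1) * (2 * (p : ℕ × ℕ).2 + 1))

/-!
Write `q = x ^ 16`. Grouping the pairs `(m, n)` and `(n, m)` shows that `Dy x` is the sum of
`n q ^ (m n)` over all odd `m` and `n`. By inclusion-exclusion on the parities, this is the sum
`L(q)` over all `m, n ≥ 1`, minus the terms with `m` even, `L(q ^ 2)`, minus the terms with `n`
even, `2 L(q ^ 2)`, plus the terms with both even, `2 L(q ^ 4)`. Finally `E2 q = 1 - 24 L(q)`, and
the constants cancel since `1 - 3 + 2 = 0`.
-/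

theorem two_mul_injective : Function.Injective fun n : ℕ => 2 * n :=
  mul_right_injective₀ two_ne_zero

theorem two_mul_add_one_injective : Function.Injective fun n : ℕ => 2 * n + 1 :=
  (add_left_injective 1).comp two_mul_injective

section Rearrangement

variable {G : Type*} [AddCommGroup G] [UniformSpace G] [IsUniformAddGroup G] [CompleteSpace G]
  [T2Space G]

theorem tsum_fst_even_add_odd {β : Type*} {f : ℕ × β → G} (hf : Summable f) :
    ∑' p : ℕ × β, f (2 * p.1, p.2) + ∑' p : ℕ × β, f (2 * p.1 + 1, p.2) = ∑' p, f p := by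
  have heven : Summable fun p : ℕ × β => f (2 * p.1, p.2) :=
    hf.comp_injective (two_mul_injective.prodMap Function.injective_id)
  have hodd : Summable fun p : ℕ × β => f (2 * p.1 + 1, p.2) :=
    hf.comp_injective (two_mul_add_one_injective.prodMap Function.injective_id)
  rw [hf.tsum_prod, heven.tsum_prod, hodd.tsum_prod]
  exact tsum_even_add_odd (f := fun a => ∑' b, f (a, b)) heven.prod hodd.prod

theorem tsum_snd_even_add_odd {β : Type*} {f : β × ℕ → G} (hf : Summable f) :
    ∑' p : β × ℕ, f (p.1, 2 * p.2) + ∑' p : β × ℕ, f (p.1, 2 * p.2 + 1) = ∑' p, f p := by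
  have h := tsum_fst_even_add_odd hf.prod_symm
  rw [← (Equiv.prodComm ℕ β).tsum_eq f,
    ← (Equiv.prodComm ℕ β).tsum_eq fun p : β × ℕ => f (p.1, 2 * p.2),
    ← (Equiv.prodComm ℕ β).tsum_eq fun p : β × ℕ => f (p.1, 2 * p.2 + 1)]
  exact h

theorem tsum_even_even {f : ℕ × ℕ → G} (hf : Summable f) :
    ∑' p : ℕ × ℕ, f (2 * p.1, 2 * p.2) =
      ∑' p, f p - ∑' p : ℕ × ℕ, f (2 * p.1 + 1, p.2) - ∑' p : ℕ × ℕ, f (p.1, 2 * p.2 + 1)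
        + ∑' p : ℕ × ℕ, f (2 * p.1 + 1, 2 * p.2 + 1) := by
  have hsnd_odd : Summable fun p : ℕ × ℕ => f (p.1, 2 * p.2 + 1) :=
    hf.comp_injective (Function.injective_id.prodMap two_mul_add_one_injective)
  have hfst_even : Summable fun p : ℕ × ℕ => f (2 * p.1, p.2) :=
    hf.comp_injective (two_mul_injective.prodMap Function.injective_id)
  rw [← tsum_fst_even_add_odd hf, ← tsum_snd_even_add_odd hfst_even,
    ← tsum_fst_even_add_odd hsnd_odd]
  abel

theorem tsum_prod_eq_tsum_diag_add_tsum_lt {ι : Type*} [LinearOrder ι] {f : ι × ι → G}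
    (hf : Summable f) :
    ∑' p, f p = ∑' i, f (i, i) + ∑' p : {p : ι × ι // p.1 < p.2}, (f p + f p.1.swap) := by
  let upper : Set (ι × ι) := {p | p.1 < p.2}
  have hcover : Set.diagonal ι ∪ (upper ∪ Prod.swap '' upper) = Set.univ := by
    ext ⟨i, j⟩
    rcases lt_trichotomy i j with h | h | h <;> simp [upper, h]
  have hdisj_upper : Disjoint upper (Prod.swap '' upper) := by
    rw [Set.disjoint_left]
    rintro ⟨i, j⟩ hij
    simpa [upper] using hij.le
  have hdisj_diag : Disjoint (Set.diagonal ι) (upper ∪ Prod.swap '' upper) := by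
    rw [Set.disjoint_left]
    rintro ⟨i, j⟩ (rfl : i = j)
    simp [upper]
  have hdiag : ∑' p : Set.diagonal ι, f p = ∑' i, f (i, i) := by
    rw [← Set.range_diag]
    exact tsum_range f Function.diag_injective
  have hlower : ∑' p : Prod.swap '' upper, f p = ∑' p : upper, f p.1.swap :=
    tsum_image f Prod.swap_injective.injOn
  calc ∑' p, f p
      = ∑' p : Set.diagonal ι, f p + (∑' p : upper, f p + ∑' p : Prod.swap '' upper, f p) := by
        rw [← tsum_univ, ← hcover,
          Summable.tsum_union_disjoint hdisj_diag (hf.subtype _) (hf.subtype _),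
          Summable.tsum_union_disjoint hdisj_upper (hf.subtype _) (hf.subtype _)]
    _ = ∑' i, f (i, i) + ∑' p : upper, (f p + f p.1.swap) := by
        rw [hdiag, hlower]
        exact congrArg _ ((hf.subtype upper).tsum_add (hf.prod_symm.subtype upper)).symm

end Rearrangement

section Lambert

variable {R : Type*} [Semiring R]

/-- The term `n ^ k q ^ (m n)` of the double series expanding the Lambert series
`∑ n ^ k q ^ n / (1 - q ^ n)`. -/
def lambertTerm (k : ℕ) (q : R) (m n : ℕ) : R :=
  (n : R) ^ k * q ^ (m * n)

theorem lambertTerm_two_mul_left (k : ℕ) (q : R) (m n : ℕ) :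
    lambertTerm k q (2 * m) n = lambertTerm k (q ^ 2) m n := by
  rw [lambertTerm, lambertTerm, ← pow_mul, mul_assoc]

theorem lambertTerm_two_mul_right (k : ℕ) (q : R) (m n : ℕ) :
    lambertTerm k q m (2 * n) = 2 ^ k * lambertTerm k (q ^ 2) m n := by
  rw [lambertTerm, lambertTerm, ← pow_mul, mul_left_comm, Nat.cast_mul,
    (Nat.cast_commute 2 (n : R)).mul_pow, Nat.cast_ofNat, mul_assoc]

/-- The Lambert series `∑ n ^ k q ^ (m n)` over all `m, n ≥ 1`; the summation indices are
`m - 1` and `n - 1`. -/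
noncomputable def lambertSeries [TopologicalSpace R] (k : ℕ) (q : R) : R :=
  ∑' p : ℕ × ℕ, lambertTerm k q (p.1 + 1) (p.2 + 1)

variable {𝕜 : Type*} [NontriviallyNormedField 𝕜] [CompleteSpace 𝕜] [NormSMulClass ℤ 𝕜]

theorem summable_lambertTerm (k : ℕ) {q : 𝕜} (hq : ‖q‖ < 1) :
    Summable fun p : ℕ × ℕ => lambertTerm k q (p.1 + 1) (p.2 + 1) :=
  ((summable_prod_mul_pow k hq).comp_injective
    (Nat.succPNat_injective.prodMap Nat.succPNat_injective)).congr fun p => by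
      simp [lambertTerm]

theorem lambertSeries_eq_tsum_sigma (k : ℕ) {q : 𝕜} (hq : ‖q‖ < 1) :
    lambertSeries k q = ∑' n : ℕ, (ArithmeticFunction.sigma k (n + 1) : 𝕜) * q ^ (n + 1) := by
  rw [← tsum_pnat_eq_tsum_succ (f := fun n => (ArithmeticFunction.sigma k n : 𝕜) * q ^ n),
    ← tsum_prod_pow_eq_tsum_sigma k hq, ← (summable_prod_mul_pow k hq).tsum_prod]
  exact (Equiv.prodCongr Equiv.pnatEquivNat Equiv.pnatEquivNat).symm.tsum_eq
    fun p : ℕ+ × ℕ+ => lambertTerm k q p.1 p.2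

theorem summable_lambertTerm_odd_odd (k : ℕ) {q : 𝕜} (hq : ‖q‖ < 1) :
    Summable fun p : ℕ × ℕ => lambertTerm k q (2 * p.1 + 1) (2 * p.2 + 1) := by
  simpa only [Function.comp_def, Prod.map] using
    (summable_lambertTerm k hq).comp_injective (two_mul_injective.prodMap two_mul_injective)

theorem tsum_lambertTerm_odd_odd (k : ℕ) {q : 𝕜} (hq : ‖q‖ < 1) :
    ∑' p : ℕ × ℕ, lambertTerm k q (2 * p.1 + 1) (2 * p.2 + 1) =
      lambertSeries k q - (2 ^ k + 1) * lambertSeries k (q ^ 2)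
        + 2 ^ k * lambertSeries k (q ^ 4) := by
  have hdouble (n : ℕ) : 2 * n + 1 + 1 = 2 * (n + 1) := by ring
  have hsum := summable_lambertTerm k hq
  have hparity := tsum_even_even hsum
  simp only [hdouble, lambertTerm_two_mul_left, lambertTerm_two_mul_right, tsum_mul_left,
    ← pow_mul, Nat.reduceMul] at hparity
  rw [lambertSeries, lambertSeries, lambertSeries]
  linear_combination hparity

end Lambert

theorem E2_eq_one_sub_lambertSeries {q : ℂ} (hq : ‖q‖ < 1) :
    E2 q = 1 - 24 * lambertSeries 1 q := by
  rw [E2, lambertSeries_eq_tsum_sigma 1 hq]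

theorem Dy_eq_tsum_lambertTerm_odd_odd {x : ℂ} (hx : ‖x‖ < 1) :
    Dy x = ∑' p : ℕ × ℕ, lambertTerm 1 (x ^ 16) (2 * p.1 + 1) (2 * p.2 + 1) := by
  have hq : ‖x ^ 16‖ < 1 :=
    (norm_pow x 16).trans_lt (pow_lt_one₀ (norm_nonneg x) hx (by norm_num))
  have hodd := summable_lambertTerm_odd_odd 1 hq
  rw [Dy, tsum_prod_eq_tsum_diag_add_tsum_lt hodd]
  refine congrArg₂ (· + ·) (tsum_congr fun r => ?_) (tsum_congr fun p => ?_)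
  · simp only [lambertTerm, ← pow_mul]
    push_cast
    ring
  · simp only [lambertTerm, ← pow_mul, Prod.fst_swap, Prod.snd_swap]
    push_cast
    ring

/-- `D_y(x) = −E₂(x¹⁶)/24 + E₂(x³²)/8 − E₂(x⁶⁴)/12` for `|x| < 1`. -/
theorem Dy_eq_eisenstein (x : ℂ) (hx : ‖x‖ < 1) :
    Dy x = -E2 (x ^ 16) / 24 + E2 (x ^ 32) / 8 - E2 (x ^ 64) / 12 := by
  have hpow (n : ℕ) (hn : n ≠ 0) : ‖x ^ n‖ < 1 :=
    (norm_pow x n).trans_lt (pow_lt_one₀ (norm_nonneg x) hx hn)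
  have h16 := hpow 16 (by norm_num)
  rw [Dy_eq_tsum_lambertTerm_odd_odd hx, tsum_lambertTerm_odd_odd 1 h16,
    E2_eq_one_sub_lambertSeries h16, E2_eq_one_sub_lambertSeries (hpow 32 (by norm_num)),
    E2_eq_one_sub_lambertSeries (hpow 64 (by norm_num)), ← pow_mul, ← pow_mul]
  ring
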